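/- Let Γ be the Z-grading of K[x,y,z] with deg x = a, deg y = b, deg z = −c, where a, b, c are nonnegative integers, a ≥ b, at least one of a, b, c equals zero, and (a,b,c) ≠ (0,0,0). Then every Γ-graded automorphism of K[x,y,z] is graded-tame, i.e., a composition of Γ-graded elementary and Γ-graded linear automorphisms. -/

import Mathlib

section
open MvPolynomial

/-- An automorphism of `K[x,y,z]` is *elementary* if it sends one variable to itself plus
a polynomial in the other two variables and fixes the other variables. -/
def IsElementary {K : Type*} [CommRing K]
    (φ : MvPolynomial (Fin 3) K ≃ₐ[K] MvPolynomial (Fin 3) K) : Prop :=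
  ∃ (i : Fin 3) (F : MvPolynomial (Fin 3) K), i ∉ F.vars ∧
    φ (X i) = X i + F ∧ ∀ j : Fin 3, j ≠ i → φ (X j) = X j

/-- An automorphism of `K[x,y,z]` is *linear* if it sends each variable to a `K`-linear
combination of the variables. -/
def IsLinearAut {K : Type*} [CommRing K]
    (φ : MvPolynomial (Fin 3) K ≃ₐ[K] MvPolynomial (Fin 3) K) : Prop :=
  ∀ i : Fin 3, ∃ c : Fin 3 → K, φ (X i) = ∑ j : Fin 3, C (c j) * X j

/-- For the `ℤ`-grading of `K[x,y,z]` with weights `w`, an automorphism is *graded*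
if it maps each homogeneous component into itself. -/
def IsGraded {K : Type*} [CommRing K] (w : Fin 3 → ℤ)
    (φ : MvPolynomial (Fin 3) K ≃ₐ[K] MvPolynomial (Fin 3) K) : Prop :=
  ∀ (d : ℤ) (f : MvPolynomial (Fin 3) K),
    f.IsWeightedHomogeneous w d → (φ f).IsWeightedHomogeneous w d

/-- A graded automorphism is *graded-tame* if it is a composition of graded elementary
and graded linear automorphisms. -/
def IsGradedTame {K : Type*} [CommRing K] (w : Fin 3 → ℤ)
    (φ : MvPolynomial (Fin 3) K ≃ₐ[K] MvPolynomial (Fin 3) K) : Prop :=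
  ∃ l : List (MvPolynomial (Fin 3) K ≃ₐ[K] MvPolynomial (Fin 3) K),
    (∀ ψ ∈ l, IsGraded w ψ ∧ (IsElementary ψ ∨ IsLinearAut ψ)) ∧ φ = l.prod

end


namespace GT
open Polynomial

section
variable {K : Type*} [Field K]

/-- coefficientwise derivative on `K[u][T]` -/
noncomputable def duFun (p : K[X][X]) : K[X][X] := p.sum fun n a => monomial n (derivative a)

lemma coeff_duFun (p : K[X][X]) (n : ℕ) : (duFun p).coeff n = derivative (p.coeff n) := by
  unfold duFun
  rw [Polynomial.sum, finsetSum_coeff]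
  simp only [coeff_monomial]
  rw [Finset.sum_ite_eq']
  split_ifs with h
  · rfl
  · rw [notMem_support_iff.mp h, derivative_zero]

noncomputable def du : Derivation K K[X][X] K[X][X] :=
  Derivation.mk'
    { toFun := duFun
      map_add' := fun p q => by ext1 n; simp [coeff_duFun]
      map_smul' := fun c p => by ext1 n; simp [coeff_duFun] }
    (fun p q => by
      ext1 n
      simp only [LinearMap.coe_mk, AddHom.coe_mk, smul_eq_mul, coeff_add, coeff_duFun, coeff_mul,
        derivative_sum, derivative_mul, Finset.sum_add_distrib]
      rw [add_comm]
      congr 1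
      rw [← Finset.Nat.sum_antidiagonal_swap]
      exact Finset.sum_congr rfl fun x _ => by simp [mul_comm])

lemma coeff_du (p : K[X][X]) (n : ℕ) : (du p).coeff n = derivative (p.coeff n) := coeff_duFun p n

noncomputable def dT : Derivation K K[X][X] K[X][X] :=
  Derivation.mk' ((derivative (R := K[X])).restrictScalars K)
    (fun p q => by simp [derivative_mul]; ring)

lemma dT_apply (p : K[X][X]) : dT p = derivative p := rfl

/-- evaluation of a bivariate polynomial -/
noncomputable def ev {A : Type*} [CommRing A] [Algebra K A] (f g : A) : K[X][X] →ₐ[K] A :=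
  { eval₂RingHom (aeval f : K[X] →ₐ[K] A).toRingHom g with
    commutes' := fun r => by
      simp [Polynomial.algebraMap_apply] }

variable {A : Type*} [CommRing A] [Algebra K A] 

lemma ev_C (f g : A) (a : K[X]) : ev f g (C a) = aeval f a := by simp [ev]
lemma ev_X (f g : A) : ev (K := K) f g X = g := by simp [ev]

lemma ev_sum (f g : A) (G : K[X][X]) :
    ev f g G = G.sum fun j a => a.sum fun i c => algebraMap K A c * f ^ i * g ^ j := by
  change eval₂ _ _ _ = _
  rw [eval₂_eq_sum]
  simp only [Polynomial.sum, AlgHom.toRingHom_eq_coe, RingHom.coe_coe, aeval_def, eval₂_eq_sum, Finset.sum_mul]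

lemma ev_chain (D : Derivation K A A) (f g : A) (G : K[X][X]) :
    D (ev f g G) = ev f g (du G) * D f + ev f g (dT G) * D g := by
  have h1 : ∀ a : K[X], D (aeval f a) = aeval f (derivative a) * D f := by
    intro a
    induction a using Polynomial.induction_on' with
    | add p q hp hq => simp [hp, hq, add_mul]
    | monomial n c =>
      simp [aeval_monomial, derivative_monomial, Derivation.leibniz, Derivation.leibniz_pow]
      ring
  have hduC : ∀ a : K[X], du (C a) = C (derivative a) := by
    intro a; ext1 n; rw [coeff_du, coeff_C, coeff_C]; split_ifs <;> simp
  have hduX : du (X : K[X][X]) = 0 := by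
    ext1 n; rw [coeff_du, coeff_X]; split_ifs <;> simp
  induction G using Polynomial.induction_on' with
  | add p q hp hq => simp only [map_add, hp, hq]; ring
  | monomial n a =>
    rw [← C_mul_X_pow_eq_monomial]
    simp only [map_mul, map_pow, ev_C, ev_X, Derivation.leibniz, Derivation.leibniz_pow, h1, hduC,
      hduX, smul_eq_mul, dT_apply, derivative_C, derivative_X, map_add, nsmul_eq_mul, mul_zero,
      map_zero, map_natCast, map_one]
    ring

/-- Jacobian in `u, T`. -/
noncomputable def jac (f g : K[X][X]) : K[X][X] := dT f * du g - du f * dT g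

lemma jac_chain (f g : K[X][X]) (G H : K[X][X]) :
    jac (ev f g G) (ev f g H) = ev f g (du G * dT H - dT G * du H) * jac f g := by
  simp only [jac, ev_chain, map_sub, map_mul]; ring

lemma jac_chain' (f g : K[X][X]) (G : K[X][X]) :
    jac f (ev f g G) = ev f g (dT G) * jac f g := by
  simp only [jac, ev_chain]; ring

lemma natDegree_du (p : K[X][X]) : (du p).natDegree ≤ p.natDegree := by
  rw [natDegree_le_iff_coeff_eq_zero]
  intro N hN
  rw [coeff_du, coeff_eq_zero_of_natDegree_lt hN, derivative_zero]

lemma natDegree_jac (f g : K[X][X]) (hf : 1 ≤ f.natDegree) :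
    (jac f g).natDegree + 1 ≤ f.natDegree + g.natDegree := by
  have h1 := natDegree_du f
  have h2 := natDegree_du g
  have h3 : (dT f).natDegree ≤ f.natDegree - 1 := natDegree_derivative_le f
  have h4 : (dT g).natDegree ≤ g.natDegree - 1 := natDegree_derivative_le g
  have h5 : (dT f * du g).natDegree + 1 ≤ f.natDegree + g.natDegree := by
    have := natDegree_mul_le (p := dT f) (q := du g); omega
  have h6 : (du f * dT g).natDegree + 1 ≤ f.natDegree + g.natDegree := by
    by_cases hg : g.natDegree = 0
    · have : dT g = 0 := by
        rw [dT_apply, eq_C_of_natDegree_eq_zero hg, derivative_C]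
      rw [this, mul_zero, natDegree_zero]; omega
    · have := natDegree_mul_le (p := du f) (q := dT g); omega
  have := natDegree_sub_le (dT f * du g) (du f * dT g)
  unfold jac
  omega

lemma coeff_jac (f g : K[X][X]) (hf : 1 ≤ f.natDegree) (hg : 1 ≤ g.natDegree) :
    (jac f g).coeff (f.natDegree + g.natDegree - 1) =
      (f.natDegree : K[X]) * f.leadingCoeff * derivative g.leadingCoeff
        - (g.natDegree : K[X]) * derivative f.leadingCoeff * g.leadingCoeff := by
  have h1 := natDegree_du f
  have h2 := natDegree_du g
  have h3 : (dT f).natDegree ≤ f.natDegree - 1 := natDegree_derivative_le f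
  have h4 : (dT g).natDegree ≤ g.natDegree - 1 := natDegree_derivative_le g
  unfold jac
  rw [coeff_sub]
  have e1 : f.natDegree + g.natDegree - 1 = (f.natDegree - 1) + g.natDegree := by omega
  have e2 : f.natDegree + g.natDegree - 1 = f.natDegree + (g.natDegree - 1) := by omega
  have e3 : f.natDegree - 1 + 1 = f.natDegree := by omega
  have e4 : g.natDegree - 1 + 1 = g.natDegree := by omega
  congr 1
  · rw [e1, coeff_mul_add_eq_of_natDegree_le h3 h2, coeff_du, dT_apply, coeff_derivative, e3]
    have : ((f.natDegree - 1 : ℕ) : K[X]) + 1 = f.natDegree := by rw [← Nat.cast_succ, Nat.succ_eq_add_one, e3]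
    rw [this, leadingCoeff, leadingCoeff]; ring
  · rw [e2, coeff_mul_add_eq_of_natDegree_le h1 h4, coeff_du, dT_apply, coeff_derivative, e4]
    have : ((g.natDegree - 1 : ℕ) : K[X]) + 1 = g.natDegree := by rw [← Nat.cast_succ, Nat.succ_eq_add_one, e4]
    rw [this, leadingCoeff, leadingCoeff]; ring

/-- Proportionality from vanishing wronskian. -/
lemma prop_of_wronskian [CharZero K] (a b : K[X]) (hb : b ≠ 0)
    (h : a * derivative b = derivative a * b) : ∃ c : K, a = C c * b := by
  classical
  obtain ⟨a', ha⟩ := EuclideanDomain.gcd_dvd_left a b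
  obtain ⟨b', hb'⟩ := EuclideanDomain.gcd_dvd_right a b
  have hg : EuclideanDomain.gcd a b ≠ 0 := fun h0 => hb (EuclideanDomain.gcd_eq_zero_iff.1 h0).2
  have hbz := EuclideanDomain.gcd_eq_gcd_ab a b
  set d := EuclideanDomain.gcd a b
  have hco : IsCoprime a' b' := by
    refine ⟨EuclideanDomain.gcdA a b, EuclideanDomain.gcdB a b, ?_⟩
    apply mul_left_cancel₀ hg
    calc _ = (d * a') * EuclideanDomain.gcdA a b + (d * b') * EuclideanDomain.gcdB a b := by ring
      _ = _ := by rw [← ha, ← hb', ← hbz, mul_one]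
  have hw : wronskian a' b' = 0 := by
    have h2 : d * d * wronskian a' b' = 0 := by
      have h' : a * derivative b - derivative a * b = 0 := sub_eq_zero.2 h
      have e1 : derivative a = derivative d * a' + d * derivative a' := by
        rw [← derivative_mul, ← ha]
      have e2 : derivative b = derivative d * b' + d * derivative b' := by
        rw [← derivative_mul, ← hb']
      rw [wronskian, ← h', e1, e2]
      linear_combination (-(derivative d * b' + d * derivative b')) * ha
        + (derivative d * a' + d * derivative a') * hb'
    simpa [hg] using h2
  obtain ⟨h1, h2⟩ := hco.wronskian_eq_zero_iff.1 hw
  have h3 := derivative_eq_zero.1 h1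
  have h4 := derivative_eq_zero.1 h2
  obtain ⟨s, hs⟩ := natDegree_eq_zero.1 h3
  obtain ⟨t, ht⟩ := natDegree_eq_zero.1 h4
  have ht0 : t ≠ 0 := by
    rintro rfl
    apply hb; rw [hb', ← ht, C_0, mul_zero]
  refine ⟨s / t, ?_⟩
  have h5 : a = d * C s := by rw [hs]; exact ha
  have h6 : b = d * C t := by rw [ht]; exact hb'
  rw [h5, h6]
  have : (C s : K[X]) = C (s / t) * C t := by rw [← C_mul, div_mul_cancel₀ _ ht0]
  rw [this]; ring
end
end GT
namespace GT
open Polynomial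
section
variable {K : Type*} [Field K]

/-- A sparse polynomial has roots of bounded multiplicity. -/
lemma sparse_mult [CharZero K] (P : K[X]) (hP : P ≠ 0) (p : ℕ) (hp : 1 ≤ p) (β : K) (hβ : β ≠ 0)
    (hsp : ∀ i j, i ≤ j → P.coeff i ≠ 0 → P.coeff j ≠ 0 → p ∣ j - i) :
    P.rootMultiplicity β * p ≤ P.natDegree := by
  obtain ⟨Q, j0, hQ, hPQ⟩ : ∃ (Q : K[X]) (j0 : ℕ), Q.coeff 0 ≠ 0 ∧ P = X ^ j0 * Q := by
    obtain ⟨Q, h1, h2⟩ := exists_eq_pow_rootMultiplicity_mul_and_not_dvd P hP 0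
    rw [C_0, sub_zero] at h1 h2
    exact ⟨Q, _, fun h => h2 (X_dvd_iff.2 h), h1⟩
  have hQ0 : Q ≠ 0 := by rintro rfl; simp at hQ
  have hc : ∀ i, Q.coeff i = P.coeff (i + j0) := by
    intro i; rw [hPQ, coeff_X_pow_mul]
  have hu : expand K p (contract p Q) = Q := by
    ext n
    rw [coeff_expand (by omega), coeff_contract (by omega)]
    split_ifs with h
    · rw [Nat.div_mul_cancel h]
    · by_contra h3
      apply h
      have := hsp j0 (n + j0) (by omega) (by rw [hc 0, zero_add] at hQ; exact hQ)
        (by rw [← hc]; exact fun h => h3 h.symm)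
      rwa [Nat.add_sub_cancel] at this
  set u := contract p Q
  have hu0 : u ≠ 0 := by rintro h; rw [h, map_zero] at hu; exact hQ0 hu.symm
  obtain ⟨v, hv1, hv2⟩ := exists_eq_pow_rootMultiplicity_mul_and_not_dvd u hu0 (β ^ p)
  set s := u.rootMultiplicity (β ^ p)
  have hv3 : v.eval (β ^ p) ≠ 0 := fun h => hv2 (dvd_iff_isRoot.2 h)
  have hPP : P = (X ^ p - C (β ^ p)) ^ s * (X ^ j0 * expand K p v) := by
    rw [hPQ, ← hu, hv1]; simp only [map_mul, map_pow, map_sub, expand_X, expand_C]; ring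
  obtain ⟨w, hw⟩ : (X - C β) ∣ (X ^ p - C (β ^ p) : K[X]) := dvd_iff_isRoot.2 (by simp)
  have hwβ : w.eval β ≠ 0 := by
    have := congrArg (fun q => (derivative q).eval β) hw
    simp only [derivative_mul, derivative_sub, derivative_X_pow, derivative_C, derivative_X, eval_sub, eval_mul, eval_add, eval_X, eval_C, eval_pow,
      sub_self, zero_mul, sub_zero, one_mul, add_zero] at this
    rw [← this]
    have : (p : K) ≠ 0 := by exact_mod_cast (by omega : p ≠ 0)
    simp [this, hβ]
  have hPP2 : P = (X - C β) ^ s * (w ^ s * (X ^ j0 * expand K p v)) := by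
    rw [hPP, hw, mul_pow]; ring
  have hm : P.rootMultiplicity β = s := by
    have hr : (w ^ s * (X ^ j0 * expand K p v)).eval β ≠ 0 := by
      simp [hwβ, hβ, expand_eval, hv3]
    have hr0 : (w ^ s * (X ^ j0 * expand K p v)) ≠ 0 := by
      intro h; rw [h] at hr; simp at hr
    rw [hPP2, mul_comm, rootMultiplicity_mul_X_sub_C_pow hr0, rootMultiplicity_eq_zero hr, zero_add]
  rw [hm]
  have h1 : s ≤ u.natDegree := by
    have hv0 : v ≠ 0 := by rintro rfl; simp at hv3
    have h := congrArg natDegree hv1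
    rw [natDegree_mul (pow_ne_zero _ (X_sub_C_ne_zero _)) hv0, natDegree_pow, natDegree_X_sub_C] at h
    omega
  have h2 : P.natDegree = j0 + u.natDegree * p := by
    rw [hPQ, natDegree_mul (by simp) hQ0, natDegree_X_pow, ← hu, natDegree_expand]
  rw [h2]
  nlinarith

def Bdd (p q : ℕ) (G : K[X][X]) (W : ℕ) : Prop :=
  ∀ i j, (G.coeff j).coeff i ≠ 0 → p * i + q * j ≤ W

noncomputable def top (p q : ℕ) (α : K) (G : K[X][X]) (W : ℕ) : K[X] :=
  G.sum fun j a => a.sum fun i c => if p * i + q * j = W then C (c * α ^ i) * X ^ j else 0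

lemma coeff_top (p q : ℕ) (α : K) (G : K[X][X]) (W j : ℕ) :
    (top p q α G W).coeff j =
      (G.coeff j).sum fun i c => if p * i + q * j = W then c * α ^ i else 0 := by
  unfold top
  rw [Polynomial.sum, finsetSum_coeff]
  rw [Finset.sum_eq_single j]
  · simp only [Polynomial.sum, finsetSum_coeff]
    refine Finset.sum_congr rfl fun i _ => ?_
    split_ifs
    · rw [coeff_C_mul, coeff_X_pow_self, mul_one]
    · simp
  · intro b _ hb
    simp only [Polynomial.sum, finsetSum_coeff]
    refine Finset.sum_eq_zero fun i _ => ?_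
    split_ifs
    · rw [coeff_C_mul, coeff_X_pow, if_neg (Ne.symm hb), mul_zero]
    · simp
  · intro h
    rw [notMem_support_iff.1 h]; simp

lemma coeff_top_ne (p q : ℕ) (α : K) (G : K[X][X]) (W j : ℕ) (h : (top p q α G W).coeff j ≠ 0) :
    ∃ i, p * i + q * j = W := by
  by_contra hc
  push Not at hc
  apply h
  rw [coeff_top, Polynomial.sum]
  exact Finset.sum_eq_zero fun i _ => if_neg (hc i)

lemma coeff_top_eq (p q : ℕ) (hp : 1 ≤ p) (α : K) (G : K[X][X]) (W i j : ℕ) (h : p * i + q * j = W) :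
    (top p q α G W).coeff j = (G.coeff j).coeff i * α ^ i := by
  rw [coeff_top, Polynomial.sum, Finset.sum_eq_single i]
  · rw [if_pos h]
  · intro b _ hb
    rw [if_neg]
    intro h2
    apply hb
    have : p * b = p * i := by omega
    exact Nat.eq_of_mul_eq_mul_left (by omega) this
  · intro h; rw [notMem_support_iff.1 h]; simp

lemma top_eval (p q d : ℕ) (hd : 1 ≤ d) (f g : K[X][X]) (hf : f.natDegree = p * d)
    (hg : g.natDegree = q * d) (u0 : K) (G : K[X][X]) (W : ℕ) (hG : Bdd p q G W) :
    ((ev f g G).coeff (d * W)).eval u0 =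
      (top p q (f.leadingCoeff.eval u0) G W).eval (g.leadingCoeff.eval u0) := by
  rw [ev_sum]
  unfold top
  simp only [Polynomial.sum, finsetSum_coeff, eval_finsetSum]
  refine Finset.sum_congr rfl fun j _ => Finset.sum_congr rfl fun i hi => ?_
  have hij := hG i j (mem_support_iff.1 hi)
  have hfi : (f ^ i).natDegree ≤ i * (p * d) := hf ▸ natDegree_pow_le
  have hgj : (g ^ j).natDegree ≤ j * (q * d) := hg ▸ natDegree_pow_le
  have e : algebraMap K K[X][X] ((G.coeff j).coeff i) = C (C ((G.coeff j).coeff i)) := rfl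
  rw [e, mul_assoc, coeff_C_mul]
  split_ifs with h
  · have e2 : d * W = i * (p * d) + j * (q * d) := by rw [← h]; ring
    rw [e2, coeff_mul_add_eq_of_natDegree_le hfi hgj, coeff_pow_of_natDegree_le hf.le,
      coeff_pow_of_natDegree_le hg.le, leadingCoeff, leadingCoeff, hf, hg]
    simp [mul_assoc]
  · have e2 : i * (p * d) + j * (q * d) < d * W := by
      have : i * (p * d) + j * (q * d) = d * (p * i + q * j) := by ring
      rw [this]
      exact Nat.mul_lt_mul_of_pos_left (by omega) (by omega)
    have e3 : (f ^ i * g ^ j).coeff (d * W) = 0 := by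
      apply coeff_eq_zero_of_natDegree_lt
      have := natDegree_mul_le (p := f ^ i) (q := g ^ j)
      exact lt_of_le_of_lt this (lt_of_le_of_lt (add_le_add hfi hgj) e2)
    rw [e3, mul_zero, eval_zero, eval_zero]

lemma top_deriv (p q : ℕ) (hp : 1 ≤ p) (α : K) (G : K[X][X]) (W : ℕ) :
    derivative (top p q α G (W + q)) = top p q α (derivative G) W := by
  ext j
  rw [coeff_derivative]
  by_cases h : ∃ i, p * i + q * j = W
  · obtain ⟨i, hi⟩ := h
    rw [coeff_top_eq p q hp α _ _ i (j + 1) (by rw [← hi]; ring), coeff_top_eq p q hp α _ _ i j hi,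
      coeff_derivative]
    have : ((j : K[X]) + 1) = C ((j : K) + 1) := by simp
    rw [this, coeff_mul_C]; ring
  · have h1 : (top p q α (derivative G) W).coeff j = 0 := by
      by_contra h2; exact h (coeff_top_ne _ _ _ _ _ _ h2)
    have h2 : (top p q α G (W + q)).coeff (j + 1) = 0 := by
      by_contra h2
      obtain ⟨i, hi⟩ := coeff_top_ne _ _ _ _ _ _ h2
      exact h ⟨i, by rw [mul_add] at hi; omega⟩
    rw [h1, h2, zero_mul]

lemma core_ineq (p q d : ℕ) (hp : 2 ≤ p) (hd : 1 ≤ d) (f g : K[X][X])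
    (hf : f.natDegree = p * d)
    (hg : g.natDegree = q * d) (u0 : K) (hJ : (jac f g).natDegree = 1) (s : ℕ) :
    ∀ (G : K[X][X]) (W : ℕ), Bdd p q G W →
      (derivative^[s] (top p q (f.leadingCoeff.eval u0) G W)).eval (g.leadingCoeff.eval u0) ≠ 0 →
      d * W + 2 * s ≤ (ev f g G).natDegree + s * (p * d + q * d) := by
  induction s with
  | zero =>
    intro G W hG h
    rw [Function.iterate_zero, id, ← top_eval p q d hd f g hf hg u0 G W hG] at h
    have : (ev f g G).coeff (d * W) ≠ 0 := by rintro h0; rw [h0] at h; simp at h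
    have := le_natDegree_of_ne_zero this
    omega
  | succ s ih =>
    intro G W hG h
    have hW : q ≤ W := by
      by_contra hq
      apply h
      rw [Function.iterate_succ_apply]
      have : derivative (top p q (f.leadingCoeff.eval u0) G W) = 0 := by
        ext j
        rw [coeff_derivative, coeff_zero]
        have : (top p q (f.leadingCoeff.eval u0) G W).coeff (j + 1) = 0 := by
          by_contra h2
          obtain ⟨i, hi⟩ := coeff_top_ne _ _ _ _ _ _ h2
          rw [mul_add] at hi; omega
        rw [this, zero_mul]
      rw [this, iterate_derivative_zero, eval_zero]
    obtain ⟨W', rfl⟩ : ∃ W', W = W' + q := ⟨W - q, by omega⟩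
    rw [Function.iterate_succ_apply, top_deriv p q (by omega)] at h
    have hB : Bdd p q (derivative G) W' := by
      intro i j hij
      rw [coeff_derivative] at hij
      have : (G.coeff (j + 1)).coeff i ≠ 0 := by
        intro h0; apply hij
        have : ((j : K[X]) + 1) = C ((j : K) + 1) := by simp
        rw [this, coeff_mul_C, h0, zero_mul]
      have := hG _ _ this
      rw [mul_add] at this; omega
    have h1 := ih _ _ hB h
    have h2 : (ev f g (derivative G)).natDegree + 2 ≤ f.natDegree + (ev f g G).natDegree := by
      have hpd : 2 ≤ p * d := by nlinarith
      by_cases h0 : ev f g (derivative G) = 0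
      · rw [h0, natDegree_zero]; omega
      · have h3 := natDegree_jac f (ev f g G) (by omega)
        have hj0 : jac f g ≠ 0 := by rintro h; rw [h] at hJ; simp at hJ
        rw [jac_chain', dT_apply, natDegree_mul h0 hj0, hJ] at h3
        omega
    have h4 : d * (W' + q) = d * W' + q * d := by ring
    have h5 : (s + 1) * (p * d + q * d) = s * (p * d + q * d) + (p * d + q * d) := by ring
    rw [h4, h5]; omega

lemma exists_bdd (p q : ℕ) (hp : 1 ≤ p) (α : K) (hα : α ≠ 0) (G : K[X][X]) (hG : G ≠ 0) :
    ∃ W, Bdd p q G W ∧ top p q α G W ≠ 0 := by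
  classical
  let S : Set ℕ := {W | ∃ i j, (G.coeff j).coeff i ≠ 0 ∧ p * i + q * j = W}
  have hne : S.Nonempty := by
    refine ⟨_, G.leadingCoeff.natDegree, G.natDegree, ?_, rfl⟩
    have : G.leadingCoeff.leadingCoeff ≠ 0 := by simpa using hG
    exact this
  have hfin : S.Finite := by
    refine Set.Finite.subset (s := (fun x : (_ : ℕ) × ℕ => p * x.2 + q * x.1) ''
      (G.support.sigma fun j => (G.coeff j).support : Finset ((_ : ℕ) × ℕ)))
      ((Finset.finite_toSet _).image _) ?_
    rintro W ⟨i, j, h, rfl⟩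
    refine ⟨⟨j, i⟩, ?_, rfl⟩
    simp only [Finset.coe_sigma, Set.mem_sigma_iff, Finset.mem_coe, mem_support_iff]
    exact ⟨fun h0 => h (by rw [h0, coeff_zero]), h⟩
  obtain ⟨W, hW, hmax⟩ := hfin.exists_maximal hne
  refine ⟨W, ?_, ?_⟩
  · intro i j h
    by_contra hlt
    have := hmax ⟨i, j, h, rfl⟩ (by omega)
    exact hlt this
  · obtain ⟨i, j, h, hij⟩ := hW
    intro h0
    have := coeff_top_eq p q hp α G W i j hij
    rw [h0, coeff_zero] at this
    exact (mul_ne_zero h (pow_ne_zero _ hα)) this.symm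

/-- Key lemma. -/
lemma core_contra [CharZero K] (p q d : ℕ) (hp : 2 ≤ p) (hq : 2 ≤ q) (hpq : Nat.Coprime p q)
    (hd : 1 ≤ d) (f g : K[X][X])
    (hf : f.natDegree = p * d) (hg : g.natDegree = q * d)
    (hJ : (jac f g).natDegree = 1) (G : K[X][X]) : (ev f g G).natDegree ≠ 1 := by
  intro hG1
  have hG : G ≠ 0 := by rintro rfl; simp at hG1
  have hf0 : f ≠ 0 := by
    rintro rfl; rw [natDegree_zero] at hf
    have : 2 ≤ p * d := by nlinarith
    omega
  have hg0 : g ≠ 0 := by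
    rintro rfl; rw [natDegree_zero] at hg
    have : 2 ≤ q * d := by nlinarith
    omega
  obtain ⟨u0, hu⟩ : ∃ u0, (f.leadingCoeff * g.leadingCoeff).eval u0 ≠ 0 := by
    by_contra hc
    push Not at hc
    have : f.leadingCoeff * g.leadingCoeff = 0 := funext fun x => by rw [hc x, eval_zero]
    simp [hf0, hg0] at this
  rw [eval_mul] at hu
  have hα := left_ne_zero_of_mul hu
  have hβ := right_ne_zero_of_mul hu
  obtain ⟨W, hB, hT⟩ := exists_bdd p q (by omega) _ hα G hG
  set P := top p q (f.leadingCoeff.eval u0) G W with hPdef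
  set β := g.leadingCoeff.eval u0
  have hsm := sparse_mult P hT p (by omega) β hβ (by
    intro i j hij hi hj
    obtain ⟨a, ha⟩ := coeff_top_ne _ _ _ _ _ _ hi
    obtain ⟨b, hb⟩ := coeff_top_ne _ _ _ _ _ _ hj
    refine (Nat.Coprime.dvd_mul_left (m := q) hpq).1 ?_
    rw [Nat.mul_sub]
    have : q * j - q * i = p * a - p * b := by omega
    rw [this, ← Nat.mul_sub]
    exact Dvd.intro _ rfl)
  set s := P.rootMultiplicity β with hs
  have hder : (derivative^[s] P).eval β ≠ 0 := by
    rw [hs, eval_iterate_derivative_rootMultiplicity]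
    rw [nsmul_eq_mul]
    refine mul_ne_zero (by exact_mod_cast Nat.factorial_ne_zero _) ?_
    exact eval_divByMonic_pow_rootMultiplicity_ne_zero β hT
  have hmain := core_ineq p q d hp hd f g hf hg u0 hJ s G W hB hder
  rw [hG1] at hmain
  have hW : q * P.natDegree ≤ W := by
    have : P.coeff P.natDegree ≠ 0 := by simpa using hT
    obtain ⟨i, hi⟩ := coeff_top_ne _ _ _ _ _ _ this
    omega
  have h1 : d * (q * (s * p)) ≤ d * W :=
    Nat.mul_le_mul_left _ (le_trans (Nat.mul_le_mul_left _ hsm) hW)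
  have h2 : s * (p * d + q * d) ≤ d * (q * (s * p)) := by
    have : p + q ≤ q * p := by nlinarith
    calc s * (p * d + q * d) = (s * d) * (p + q) := by ring
      _ ≤ (s * d) * (q * p) := Nat.mul_le_mul_left _ this
      _ = _ := by ring
  have hs0 : s = 0 := by omega
  rw [hs0] at hmain
  have hW1 : W ≤ 1 := by nlinarith
  have hGc : G = C (C ((G.coeff 0).coeff 0)) := by
    ext j i
    by_cases h : (G.coeff j).coeff i = 0
    · rw [h]
      rw [coeff_C]; split_ifs with h3
      · rw [coeff_C]; split_ifs with h4
        · rw [h3, h4] at h; exact h.symm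
        · rfl
      · simp
    · have := hB i j h
      have hi : i = 0 := by
        by_contra h0
        have : 1 ≤ i := by omega
        nlinarith
      have hj : j = 0 := by
        by_contra h0
        have : 1 ≤ j := by omega
        nlinarith
      rw [hi, hj]; simp
  rw [hGc, ev_C, aeval_C] at hG1
  have e : algebraMap K K[X][X] ((G.coeff 0).coeff 0) = C (C ((G.coeff 0).coeff 0)) := rfl
  rw [e, natDegree_C] at hG1
  omega
end
end GT
namespace GT
open Polynomial
section
variable {K : Type*} [Field K]

lemma natDegree_pos_of_jac (f g : K[X][X]) (hf : ∃ a : K, f.coeff 0 = C a) (hJ : jac f g ≠ 0) :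
    1 ≤ f.natDegree := by
  by_contra h
  have h0 : f.natDegree = 0 := by omega
  obtain ⟨a, ha⟩ := hf
  have hfc : f = algebraMap K K[X][X] a := by
    rw [eq_C_of_natDegree_eq_zero h0, ha]; rfl
  apply hJ
  unfold jac
  rw [hfc, Derivation.map_algebraMap, Derivation.map_algebraMap]; ring

lemma jac_swap (f g : K[X][X]) : jac g f = - jac f g := by unfold jac; ring

lemma jac_natDegree (f g : K[X][X]) (hf : ∃ a : K, f.coeff 0 = C a) (hg : ∃ a : K, g.coeff 0 = C a)
    (G H : K[X][X]) (hG : ev f g G = X) (hH : ev f g H = C X * X) :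
    (jac f g).natDegree = 1 := by
  have h1 := jac_chain f g G H
  rw [hG, hH] at h1
  have h2 : jac (X : K[X][X]) (C X * X) = X := by
    unfold jac
    have e1 : du (X : K[X][X]) = 0 := by
      ext1 n; rw [coeff_du, coeff_X]; split_ifs <;> simp
    have e2 : du (C X * X : K[X][X]) = X := by
      ext1 n; rw [coeff_du, coeff_C_mul, coeff_X]; split_ifs <;> simp
    rw [e1, e2, dT_apply, derivative_X]; ring
  rw [h2] at h1
  have hdvd : jac f g ∣ X := Dvd.intro_left _ h1.symm
  have h0 : X ∣ jac f g := by
    rw [X_dvd_iff]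
    obtain ⟨a, ha⟩ := hf
    obtain ⟨b, hb⟩ := hg
    unfold jac
    simp only [coeff_sub, mul_coeff_zero, coeff_du, ha, hb, derivative_C]; ring
  have := natDegree_eq_of_degree_eq (degree_eq_degree_of_associated (associated_of_dvd_dvd hdvd h0))
  rw [this, natDegree_X]

lemma lead_reduce [CharZero K] (f g : K[X][X]) (hf : 1 ≤ f.natDegree) (hg : 1 ≤ g.natDegree)
    (hw : (f.natDegree : K[X]) * f.leadingCoeff * derivative g.leadingCoeff
        = (g.natDegree : K[X]) * derivative f.leadingCoeff * g.leadingCoeff)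
    (hdvd : g.natDegree ∣ f.natDegree) :
    ∃ (c : K) (m : ℕ), (f - C (C c) * g ^ m).natDegree < f.natDegree := by
  obtain ⟨m, hm⟩ := hdvd
  have hg0 : g ≠ 0 := by rintro rfl; simp at hg
  obtain ⟨c, hc⟩ := prop_of_wronskian f.leadingCoeff (g.leadingCoeff ^ m)
    (pow_ne_zero _ (leadingCoeff_ne_zero.2 hg0)) (by
      have hn : (g.natDegree : K[X]) ≠ 0 := by
        exact_mod_cast (by omega : g.natDegree ≠ 0)
      apply mul_left_cancel₀ hn
      have hm0 : m ≠ 0 := by rintro rfl; omega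
      obtain ⟨k, rfl⟩ := Nat.exists_eq_succ_of_ne_zero hm0
      rw [hm] at hw
      rw [derivative_pow_succ]
      push_cast at hw
      simp only [Nat.succ_eq_add_one, pow_succ, C_add, C_1, map_natCast]
      linear_combination g.leadingCoeff ^ k * hw)
  refine ⟨c, m, ?_⟩
  have h1 : (C (C c) * g ^ m).natDegree ≤ f.natDegree := by
    refine (natDegree_C_mul_le _ _).trans (natDegree_pow_le.trans ?_)
    rw [hm, mul_comm]
  have h2 : (f - C (C c) * g ^ m).natDegree ≤ f.natDegree :=
    (natDegree_sub_le _ _).trans (max_le le_rfl h1)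
  refine lt_of_le_of_ne h2 fun he => ?_
  have h3 : (f - C (C c) * g ^ m).coeff f.natDegree = 0 := by
    rw [coeff_sub, coeff_C_mul]
    conv_lhs => rw [hm, mul_comm, coeff_pow_of_natDegree_le le_rfl, mul_comm, ← hm]
    change f.leadingCoeff - C c * g.leadingCoeff ^ m = 0
    rw [← hc, sub_self]
  rw [← he] at h3
  have h4 := leadingCoeff_eq_zero.1 h3
  rw [h4, natDegree_zero] at he
  omega

/-- Jung reduction. -/
lemma jung_reduce [CharZero K] (f g : K[X][X]) (hf : ∃ a : K, f.coeff 0 = C a)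
    (hg : ∃ a : K, g.coeff 0 = C a)
    (G H : K[X][X]) (hG : ev f g G = X) (hH : ev f g H = C X * X) :
    (f.natDegree ≤ 1 ∧ g.natDegree ≤ 1) ∨
    (∃ (c : K) (m : ℕ), (f - C (C c) * g ^ m).natDegree < f.natDegree) ∨
    (∃ (c : K) (m : ℕ), (g - C (C c) * f ^ m).natDegree < g.natDegree) := by
  have hJ := jac_natDegree f g hf hg G H hG hH
  have hJ0 : jac f g ≠ 0 := by rintro h; rw [h] at hJ; simp at hJ
  have hf1 := natDegree_pos_of_jac f g hf hJ0
  have hg1 := natDegree_pos_of_jac g f hg (by rw [jac_swap]; exact neg_ne_zero.2 hJ0)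
  by_cases h11 : f.natDegree ≤ 1 ∧ g.natDegree ≤ 1
  · exact Or.inl h11
  right
  have hw := coeff_jac f g hf1 hg1
  rw [coeff_eq_zero_of_natDegree_lt (by omega)] at hw
  have hw' := sub_eq_zero.1 hw.symm
  by_cases hd1 : g.natDegree ∣ f.natDegree
  · exact Or.inl (lead_reduce f g hf1 hg1 hw' hd1)
  by_cases hd2 : f.natDegree ∣ g.natDegree
  · exact Or.inr (lead_reduce g f hg1 hf1 (by linear_combination -hw') hd2)
  exfalso
  obtain ⟨p, q, hpq, hp, hq⟩ := Nat.exists_coprime f.natDegree g.natDegree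
  set d := Nat.gcd f.natDegree g.natDegree
  have hdpos : 1 ≤ d := Nat.gcd_pos_of_pos_left _ hf1
  have hp2 : 2 ≤ p := by
    by_contra h
    have : p = 0 ∨ p = 1 := by omega
    rcases this with h | h
    · rw [h, zero_mul] at hp; omega
    · apply hd2; rw [hq, hp, h, one_mul]; exact Dvd.intro_left _ rfl
  have hq2 : 2 ≤ q := by
    by_contra h
    have : q = 0 ∨ q = 1 := by omega
    rcases this with h | h
    · rw [h, zero_mul] at hq; omega
    · apply hd1; rw [hq, hp, h, one_mul]; exact Dvd.intro_left _ rfl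
  refine core_contra p q d hp2 hq2 hpq hdpos f g hp hq hJ G ?_
  rw [hG, natDegree_X]
end
end GT
namespace GT
open MvPolynomial
section
variable {K : Type*} [Field K]

lemma graded_of_X (w : Fin 3 → ℤ) (φ : MvPolynomial (Fin 3) K ≃ₐ[K] MvPolynomial (Fin 3) K)
    (h : ∀ i, (φ (X i)).IsWeightedHomogeneous w (w i)) : IsGraded w φ := by
  intro d f hf
  rw [f.as_sum, map_sum]
  refine IsWeightedHomogeneous.sum _ _ _ fun s hs => ?_
  have hd := hf (mem_support_iff.1 hs)
  rw [monomial_eq, map_mul, ← algebraMap_eq, AlgEquiv.commutes, algebraMap_eq,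
    Finsupp.prod_fintype _ _ (fun _ => pow_zero _), map_prod]
  apply IsWeightedHomogeneous.C_mul
  rw [← hd, Finsupp.weight_apply, s.sum_fintype (fun i c => c • w i) (fun _ => zero_smul _ _)]
  refine IsWeightedHomogeneous.prod _ _ _ fun i _ => ?_
  rw [map_pow]
  exact (h i).pow _

lemma graded_X {w : Fin 3 → ℤ} {φ : MvPolynomial (Fin 3) K ≃ₐ[K] MvPolynomial (Fin 3) K}
    (h : IsGraded w φ) (i : Fin 3) : (φ (X i)).IsWeightedHomogeneous w (w i) :=
  h _ _ (isWeightedHomogeneous_X _ _ _)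

lemma graded_mul {w : Fin 3 → ℤ} {φ ψ : MvPolynomial (Fin 3) K ≃ₐ[K] MvPolynomial (Fin 3) K}
    (h : IsGraded w φ) (h' : IsGraded w ψ) : IsGraded w (φ * ψ) :=
  fun d f hf => h d _ (h' d f hf)

lemma graded_symm {w : Fin 3 → ℤ} {φ : MvPolynomial (Fin 3) K ≃ₐ[K] MvPolynomial (Fin 3) K}
    (h : IsGraded w φ) : IsGraded w φ.symm := by
  classical
  have key : ∀ (d : ℤ) (P : MvPolynomial (Fin 3) K),
      weightedHomogeneousComponent w d (φ P) = φ (weightedHomogeneousComponent w d P) := by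
    intro d P
    induction P using MvPolynomial.induction_on' with
    | monomial s c =>
      have h1 := isWeightedHomogeneous_monomial w s c rfl
      rw [weightedHomogeneousComponent_of_mem (h _ _ h1), weightedHomogeneousComponent_of_mem h1]
      split_ifs <;> simp
    | add p q hp hq => simp only [map_add, hp, hq]
  intro d f hf
  have h1 := key d (φ.symm f)
  rw [AlgEquiv.apply_symm_apply, hf.weightedHomogeneousComponent_same] at h1
  have h2 : φ.symm f = weightedHomogeneousComponent w d (φ.symm f) := by
    conv_lhs => rw [h1]
    rw [AlgEquiv.symm_apply_apply]
  rw [h2]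
  exact weightedHomogeneousComponent_isWeightedHomogeneous _ _

/-- graded generators -/
def Gen (w : Fin 3 → ℤ) (ψ : MvPolynomial (Fin 3) K ≃ₐ[K] MvPolynomial (Fin 3) K) : Prop :=
  IsGraded w ψ ∧ (IsElementary ψ ∨ IsLinearAut ψ)

lemma tame_of_gen {w : Fin 3 → ℤ} {ψ : MvPolynomial (Fin 3) K ≃ₐ[K] MvPolynomial (Fin 3) K}
    (h : Gen w ψ) : IsGradedTame w ψ :=
  ⟨[ψ], by intro χ hχ; rw [List.mem_singleton] at hχ; subst hχ; exact h, by simp⟩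

lemma tame_of_mul {w : Fin 3 → ℤ} {φ ε : MvPolynomial (Fin 3) K ≃ₐ[K] MvPolynomial (Fin 3) K}
    (h : Gen w ε.symm) (h' : IsGradedTame w (φ * ε)) : IsGradedTame w φ := by
  obtain ⟨l, hl, hp⟩ := h'
  refine ⟨l ++ [ε.symm], ?_, ?_⟩
  · intro ψ hψ
    rw [List.mem_append, List.mem_singleton] at hψ
    rcases hψ with hψ | rfl
    · exact hl ψ hψ
    · exact h
  · rw [List.prod_append, ← hp, List.prod_singleton]
    ext1 x
    simp [AlgEquiv.mul_apply]

lemma aeval_update (i : Fin 3) (F a : MvPolynomial (Fin 3) K) (hF : i ∉ F.vars) :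
    aeval (Function.update X i a : Fin 3 → MvPolynomial (Fin 3) K) F = F := by
  have := hom_congr_vars (p₁ := F) (p₂ := F)
    (f₁ := ((aeval (Function.update X i a : Fin 3 → MvPolynomial (Fin 3) K)) :
      MvPolynomial (Fin 3) K →ₐ[K] MvPolynomial (Fin 3) K).toRingHom)
    (f₂ := RingHom.id _) (by ext1 r; simp) (by
      intro j hj _
      have : j ≠ i := by rintro rfl; exact hF hj
      simp [Function.update_of_ne this]) rfl
  exact this

noncomputable def elem (i : Fin 3) (F : MvPolynomial (Fin 3) K) (hF : i ∉ F.vars) :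
    MvPolynomial (Fin 3) K ≃ₐ[K] MvPolynomial (Fin 3) K :=
  AlgEquiv.ofAlgHom (aeval (Function.update X i (X i + F))) (aeval (Function.update X i (X i - F)))
    (by
      apply algHom_ext
      intro j
      by_cases h : j = i
      · subst h
        simp only [AlgHom.comp_apply, aeval_X, Function.update_self, map_add, map_sub,
          aeval_update _ _ _ hF, AlgHom.id_apply]
        ring
      · simp [Function.update_of_ne h])
    (by
      apply algHom_ext
      intro j
      by_cases h : j = i
      · subst h
        simp only [AlgHom.comp_apply, aeval_X, Function.update_self, map_add, map_sub,
          aeval_update _ _ _ hF, AlgHom.id_apply]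
        ring
      · simp [Function.update_of_ne h])

lemma elem_self (i : Fin 3) (F : MvPolynomial (Fin 3) K) (hF : i ∉ F.vars) :
    elem i F hF (X i) = X i + F := by simp [elem]

lemma elem_ne (i j : Fin 3) (F : MvPolynomial (Fin 3) K) (hF : i ∉ F.vars) (h : j ≠ i) :
    elem i F hF (X j) = X j := by simp [elem, Function.update_of_ne h]

lemma elem_symm_self (i : Fin 3) (F : MvPolynomial (Fin 3) K) (hF : i ∉ F.vars) :
    (elem i F hF).symm (X i) = X i - F := by simp [elem]

lemma elem_symm_ne (i j : Fin 3) (F : MvPolynomial (Fin 3) K) (hF : i ∉ F.vars) (h : j ≠ i) :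
    (elem i F hF).symm (X j) = X j := by simp [elem, Function.update_of_ne h]

lemma elem_graded {w : Fin 3 → ℤ} (i : Fin 3) (F : MvPolynomial (Fin 3) K) (hF : i ∉ F.vars)
    (hw : F.IsWeightedHomogeneous w (w i)) : IsGraded w (elem i F hF) := by
  apply graded_of_X
  intro j
  by_cases h : j = i
  · subst h; rw [elem_self]; exact (isWeightedHomogeneous_X _ _ _).add hw
  · rw [elem_ne _ _ _ _ h]; exact isWeightedHomogeneous_X _ _ _

lemma elem_symm_gen {w : Fin 3 → ℤ} (i : Fin 3) (F : MvPolynomial (Fin 3) K) (hF : i ∉ F.vars)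
    (hw : F.IsWeightedHomogeneous w (w i)) : Gen w (elem i F hF).symm := by
  refine ⟨graded_symm (elem_graded i F hF hw), Or.inl ⟨i, -F, by rwa [vars_neg], ?_, ?_⟩⟩
  · rw [elem_symm_self, sub_eq_add_neg]
  · intro j hj; exact elem_symm_ne _ _ _ _ hj

noncomputable def scale (i : Fin 3) (v : K) (hv : v ≠ 0) :
    MvPolynomial (Fin 3) K ≃ₐ[K] MvPolynomial (Fin 3) K :=
  AlgEquiv.ofAlgHom (aeval (Function.update X i (C v * X i)))
    (aeval (Function.update X i (C v⁻¹ * X i)))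
    (by
      apply algHom_ext
      intro j
      by_cases h : j = i
      · subst h
        simp only [AlgHom.comp_apply, aeval_X, Function.update_self, map_mul, algHom_C, algebraMap_eq,
          AlgHom.id_apply]
        rw [← mul_assoc, ← C_mul, inv_mul_cancel₀ hv, C_1, one_mul]
      · simp [Function.update_of_ne h])
    (by
      apply algHom_ext
      intro j
      by_cases h : j = i
      · subst h
        simp only [AlgHom.comp_apply, aeval_X, Function.update_self, map_mul, algHom_C, algebraMap_eq,
          AlgHom.id_apply]
        rw [← mul_assoc, ← C_mul, mul_inv_cancel₀ hv, C_1, one_mul]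
      · simp [Function.update_of_ne h])

lemma scale_self (i : Fin 3) (v : K) (hv : v ≠ 0) : scale i v hv (X i) = C v * X i := by
  simp [scale]
lemma scale_ne (i j : Fin 3) (v : K) (hv : v ≠ 0) (h : j ≠ i) : scale i v hv (X j) = X j := by
  simp [scale, Function.update_of_ne h]
lemma scale_symm_self (i : Fin 3) (v : K) (hv : v ≠ 0) :
    (scale i v hv).symm (X i) = C v⁻¹ * X i := by
  simp [scale]
lemma scale_symm_ne (i j : Fin 3) (v : K) (hv : v ≠ 0) (h : j ≠ i) :
    (scale i v hv).symm (X j) = X j := by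
  simp [scale, Function.update_of_ne h]

lemma scale_graded (w : Fin 3 → ℤ) (i : Fin 3) (v : K) (hv : v ≠ 0) :
    IsGraded w (scale i v hv) := by
  apply graded_of_X
  intro j
  by_cases h : j = i
  · subst h; rw [scale_self]; exact (isWeightedHomogeneous_X _ _ _).C_mul _
  · rw [scale_ne _ _ _ _ h]; exact isWeightedHomogeneous_X _ _ _

lemma scale_symm_gen (w : Fin 3 → ℤ) (i : Fin 3) (v : K) (hv : v ≠ 0) :
    Gen w (scale i v hv).symm := by
  refine ⟨graded_symm (scale_graded w i v hv), Or.inr ?_⟩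
  intro j
  by_cases h : j = i
  · subst h
    refine ⟨fun l => if l = j then v⁻¹ else 0, ?_⟩
    rw [scale_symm_self, Finset.sum_eq_single j]
    · simp
    · intro b _ hb; simp [hb]
    · simp
  · refine ⟨fun l => if l = j then 1 else 0, ?_⟩
    rw [scale_symm_ne _ _ _ _ h, Finset.sum_eq_single j]
    · simp
    · intro b _ hb; simp [hb]
    · simp

/-- normalise a scaled variable -/
lemma normalize {w : Fin 3 → ℤ} {φ : MvPolynomial (Fin 3) K ≃ₐ[K] MvPolynomial (Fin 3) K}
    (hφ : IsGraded w φ) (k : Fin 3) (v : K) (h : φ (X k) = C v * X k)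
    (H : ∀ φ' : MvPolynomial (Fin 3) K ≃ₐ[K] MvPolynomial (Fin 3) K, IsGraded w φ' →
      φ' (X k) = X k → (∀ j, j ≠ k → φ' (X j) = φ (X j)) → IsGradedTame w φ') :
    IsGradedTame w φ := by
  have hv : v ≠ 0 := by
    rintro rfl
    rw [C_0, zero_mul, map_eq_zero_iff φ φ.injective] at h
    exact X_ne_zero k h
  refine tame_of_mul (scale_symm_gen w k v⁻¹ (inv_ne_zero hv)) (H _ (graded_mul hφ (scale_graded _ _ _ _)) ?_ ?_)
  · rw [AlgEquiv.mul_apply, scale_self, map_mul, h, ← algebraMap_eq, AlgEquiv.commutes, algebraMap_eq,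
      ← mul_assoc, ← C_mul, inv_mul_cancel₀ hv, C_1, one_mul]
  · intro j hj
    rw [AlgEquiv.mul_apply, scale_ne _ _ _ _ hj]

lemma isUnit_C {h h' : MvPolynomial (Fin 3) K} (hh : h * h' = 1) : ∃ v : K, v ≠ 0 ∧ h = C v := by
  obtain ⟨r, hr, he⟩ := isUnit_iff_eq_C_of_isReduced.1 (IsUnit.of_mul_eq_one _ hh)
  exact ⟨r, hr.ne_zero, he⟩

lemma X_dvd_of {w : Fin 3 → ℤ} (k : Fin 3) (d : ℤ)
    (hk : ∀ s : Fin 3 →₀ ℕ, Finsupp.weight w s = d → s k ≠ 0) (P : MvPolynomial (Fin 3) K)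
    (hP : P.IsWeightedHomogeneous w d) : X k ∣ P := by
  rw [P.as_sum]
  refine Finset.dvd_sum fun s hs => ?_
  rw [X_dvd_monomial]
  exact Or.inr (hk s (hP (mem_support_iff.1 hs)))

lemma scaled_var {w : Fin 3 → ℤ} {φ : MvPolynomial (Fin 3) K ≃ₐ[K] MvPolynomial (Fin 3) K}
    (hφ : IsGraded w φ) (k : Fin 3)
    (hk : ∀ s : Fin 3 →₀ ℕ, Finsupp.weight w s = w k → s k ≠ 0) :
    ∃ v : K, φ (X k) = C v * X k := by
  obtain ⟨h, hh⟩ := X_dvd_of k (w k) hk _ (graded_X hφ k)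
  obtain ⟨h', hh'⟩ := X_dvd_of k (w k) hk _ (graded_X (graded_symm hφ) k)
  have h1 : X k = X k * (h * φ h') := by
    rw [← mul_assoc, ← hh, ← map_mul, ← hh', AlgEquiv.apply_symm_apply]
  have h2 : h * φ h' = 1 := by
    apply mul_left_cancel₀ (X_ne_zero k (R := K))
    rw [← h1, mul_one]
  obtain ⟨v, _, hv⟩ := isUnit_C h2
  exact ⟨v, by rw [hh, hv, mul_comm]⟩

lemma chain (φ : MvPolynomial (Fin 3) K ≃ₐ[K] MvPolynomial (Fin 3) K) (i : Fin 3)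
    (Q : MvPolynomial (Fin 3) K) :
    pderiv i (φ Q) = ∑ l, φ (pderiv l Q) * pderiv i (φ (X l)) := by
  induction Q using MvPolynomial.induction_on with
  | C a =>
    rw [← algebraMap_eq, AlgEquiv.commutes, algebraMap_eq]; simp
  | add p q hp hq => simp only [map_add, hp, hq, add_mul, Finset.sum_add_distrib]
  | mul_X p n hp =>
    simp only [map_mul, Derivation.leibniz, smul_eq_mul, map_add, hp, add_mul, Finset.sum_add_distrib,
      pderiv_X, Finset.mul_sum]
    congr 1
    · rw [Finset.sum_eq_single n]
      · simp
      · intro b _ hb; simp [hb]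
      · simp
    · exact Finset.sum_congr rfl fun l _ => by ring

lemma notMem_vars_of_pderiv [CharZero K] (i : Fin 3) (P : MvPolynomial (Fin 3) K)
    (h : pderiv i P = 0) : i ∉ P.vars := by
  intro hi
  obtain ⟨s, hs, hsi⟩ := (mem_vars_iff_mem_support i).1 hi
  have hsi' : s i ≠ 0 := Finsupp.mem_support_iff.1 hsi
  have h1 := coeff_pderiv (i := i) P (s - Finsupp.single i 1)
  have h2 : s - Finsupp.single i 1 + Finsupp.single i 1 = s := by
    apply tsub_add_cancel_of_le
    rw [Finsupp.single_le_iff]; omega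
  rw [h, coeff_zero, h2] at h1
  have h3 : (((s - Finsupp.single i 1 : Fin 3 →₀ ℕ) i : ℕ) : K) + 1 ≠ 0 := by
    exact Nat.cast_add_one_ne_zero _
  exact mul_ne_zero (mem_support_iff.1 hs) h3 h1.symm

/-- If the off-diagonal part of the chain rule vanishes, `φ (X i) = α X i + F`. -/
lemma affine_var [CharZero K] (φ : MvPolynomial (Fin 3) K ≃ₐ[K] MvPolynomial (Fin 3) K) (i : Fin 3)
    (h : ∀ l, l ≠ i → pderiv l (φ.symm (X i)) = 0 ∨ pderiv i (φ (X l)) = 0) :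
    ∃ (α : K) (F : MvPolynomial (Fin 3) K), α ≠ 0 ∧ i ∉ F.vars ∧ φ (X i) = C α * X i + F := by
  have h1 := chain φ i (φ.symm (X i))
  rw [AlgEquiv.apply_symm_apply, pderiv_X_self, Finset.sum_eq_single i] at h1
  · obtain ⟨α, hα, he⟩ := isUnit_C (h := pderiv i (φ (X i))) (by rw [mul_comm]; exact h1.symm)
    refine ⟨α, φ (X i) - C α * X i, hα, ?_, by ring⟩
    apply notMem_vars_of_pderiv
    rw [map_sub, he, pderiv_C_mul, pderiv_X_self]; ring
  · intro l _ hl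
    rcases h l hl with h | h <;> simp [h]
  · simp

lemma tame_of_fix [CharZero K] {w : Fin 3 → ℤ}
    {φ : MvPolynomial (Fin 3) K ≃ₐ[K] MvPolynomial (Fin 3) K}
    (hφ : IsGraded w φ) (i : Fin 3) (h : ∀ j, j ≠ i → φ (X j) = X j) : IsGradedTame w φ := by
  obtain ⟨α, F, hα, hF, he⟩ := affine_var φ i (fun l hl => Or.inr (by
    rw [h l hl, pderiv_X_of_ne hl]))
  refine tame_of_mul (scale_symm_gen w i α⁻¹ (inv_ne_zero hα))
    (tame_of_gen ⟨graded_mul hφ (scale_graded _ _ _ _), Or.inl ⟨i, C α⁻¹ * F, ?_, ?_, ?_⟩⟩)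
  · intro h1
    have := vars_mul _ _ h1
    rw [vars_C] at this
    exact hF (by simpa using this)
  · rw [AlgEquiv.mul_apply, scale_self, map_mul, he, ← algebraMap_eq, AlgEquiv.commutes, algebraMap_eq,
      mul_add, ← mul_assoc, ← C_mul, inv_mul_cancel₀ hα, C_1, one_mul]
  · intro j hj
    rw [AlgEquiv.mul_apply, scale_ne _ _ _ _ hj, h j hj]

lemma weight_eq (w : Fin 3 → ℤ) (s : Fin 3 →₀ ℕ) :
    Finsupp.weight w s = s 0 * w 0 + s 1 * w 1 + s 2 * w 2 := by
  rw [Finsupp.weight_apply, s.sum_fintype (fun i c => c • w i) (fun _ => zero_smul _ _), Fin.sum_univ_three]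
  simp
end
end GT
namespace GT
open MvPolynomial
section
set_option linter.unusedSectionVars false
variable {K : Type*} [Field K] [CharZero K]

lemma case_three {w : Fin 3 → ℤ} (h0 : 0 < w 0) (h1 : w 1 = 0) (h2 : w 2 < 0)
    {φ : MvPolynomial (Fin 3) K ≃ₐ[K] MvPolynomial (Fin 3) K} (hφ : IsGraded w φ) :
    IsGradedTame w φ := by
  have k0 : ∀ s : Fin 3 →₀ ℕ, Finsupp.weight w s = w 0 → s 0 ≠ 0 := by
    intro s hs h
    rw [weight_eq, h, h1] at hs
    have : (0 : ℤ) ≤ s 2 := by positivity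
    simp only [Nat.cast_zero] at hs
    nlinarith
  have k2 : ∀ s : Fin 3 →₀ ℕ, Finsupp.weight w s = w 2 → s 2 ≠ 0 := by
    intro s hs h
    rw [weight_eq, h, h1] at hs
    have : (0 : ℤ) ≤ s 0 := by positivity
    simp only [Nat.cast_zero] at hs
    nlinarith
  obtain ⟨v, hv⟩ := scaled_var hφ 0 k0
  refine normalize hφ 0 v hv fun φ' hφ' e0 _ => ?_
  obtain ⟨v, hv⟩ := scaled_var hφ' 2 k2
  refine normalize hφ' 2 v hv fun φ'' hφ'' e2 e => ?_
  refine tame_of_fix hφ'' 1 fun j hj => ?_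
  have e0' := e 0 (by decide)
  rw [e0] at e0'
  fin_cases j
  · exact e0'
  · exact absurd rfl hj
  · exact e2

lemma hom_aeval {w : Fin 3 → ℤ} (h2 : w 2 = 0) (p : Polynomial K) :
    (Polynomial.aeval (X 2 : MvPolynomial (Fin 3) K) p).IsWeightedHomogeneous w 0 := by
  induction p using Polynomial.induction_on' with
  | add p q hp hq => rw [map_add]; exact hp.add hq
  | monomial n a =>
    rw [Polynomial.aeval_monomial, algebraMap_eq]
    have := ((isWeightedHomogeneous_X K w 2).pow n).C_mul a
    rwa [h2, smul_zero] at this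

lemma pderiv_aeval (i : Fin 3) (hi : i ≠ 2) (p : Polynomial K) :
    pderiv i (Polynomial.aeval (X 2 : MvPolynomial (Fin 3) K) p) = 0 := by
  rw [Derivation.map_aeval, pderiv_X_of_ne hi.symm, smul_zero]

lemma lin_form {w : Fin 3 → ℤ} (h0 : 0 < w 0) (h1 : w 1 = w 0) (h2 : w 2 = 0)
    (P : MvPolynomial (Fin 3) K) (hP : P.IsWeightedHomogeneous w (w 0)) :
    ∃ A B : Polynomial K, P = Polynomial.aeval (X 2) A * X 0 + Polynomial.aeval (X 2) B * X 1 := by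
  rw [P.as_sum]
  refine Finset.sum_induction _ (fun P : MvPolynomial (Fin 3) K => ∃ A B : Polynomial K,
    P = Polynomial.aeval (X 2) A * X 0 + Polynomial.aeval (X 2) B * X 1) ?_ ?_ ?_
  · rintro _ _ ⟨A, B, rfl⟩ ⟨A', B', rfl⟩
    exact ⟨A + A', B + B', by rw [map_add, map_add]; ring⟩
  · exact ⟨0, 0, by simp⟩
  · intro s hs
    have hd := hP (mem_support_iff.1 hs)
    rw [weight_eq, h1, h2] at hd
    have hd' : ((s 0 + s 1 : ℕ) : ℤ) = 1 := by
      apply mul_right_cancel₀ h0.ne'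
      push_cast; linarith
    have hd'' : s 0 + s 1 = 1 := by exact_mod_cast hd'
    rw [monomial_eq, Finsupp.prod_fintype _ _ (fun _ => pow_zero _), Fin.prod_univ_three]
    have : (s 0 = 1 ∧ s 1 = 0) ∨ (s 0 = 0 ∧ s 1 = 1) := by omega
    rcases this with ⟨e, e'⟩ | ⟨e, e'⟩
    · refine ⟨Polynomial.monomial (s 2) (coeff s P), 0, ?_⟩
      rw [Polynomial.aeval_monomial, algebraMap_eq, e, e', map_zero]; ring
    · refine ⟨0, Polynomial.monomial (s 2) (coeff s P), ?_⟩
      rw [Polynomial.aeval_monomial, algebraMap_eq, e, e', map_zero]; ring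

noncomputable def sw : MvPolynomial (Fin 3) K ≃ₐ[K] MvPolynomial (Fin 3) K :=
  renameEquiv K (Equiv.swap (0 : Fin 3) 1)

lemma sw_0 : sw (K := K) (X 0) = X 1 := by simp [sw]
lemma sw_1 : sw (K := K) (X 1) = X 0 := by simp [sw]
lemma sw_2 : sw (K := K) (X 2) = X 2 := by
  simp [sw, Equiv.swap_apply_of_ne_of_ne (show (2 : Fin 3) ≠ 0 by decide) (show (2 : Fin 3) ≠ 1 by decide)]
lemma sw_symm : (sw (K := K)).symm = sw := by
  simp [sw]

lemma sw_gen {w : Fin 3 → ℤ} (h1 : w 1 = w 0) : Gen w (sw (K := K)) := by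
  constructor
  · apply graded_of_X
    intro i
    fin_cases i
    · change (sw (X 0)).IsWeightedHomogeneous w (w 0)
      rw [sw_0, ← h1]; exact isWeightedHomogeneous_X _ _ _
    · change (sw (X 1)).IsWeightedHomogeneous w (w 1)
      rw [sw_1, h1]; exact isWeightedHomogeneous_X _ _ _
    · change (sw (X 2)).IsWeightedHomogeneous w (w 2)
      rw [sw_2]; exact isWeightedHomogeneous_X _ _ _
  · right
    intro i
    fin_cases i
    · exact ⟨![0, 1, 0], by simp [Fin.sum_univ_three, sw_0]⟩
    · exact ⟨![1, 0, 0], by simp [Fin.sum_univ_three, sw_1]⟩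
    · exact ⟨![0, 0, 1], by simp [Fin.sum_univ_three, sw_2]⟩

lemma case_gcd {w : Fin 3 → ℤ} (h0 : 0 < w 0) (h1 : w 1 = w 0) (h2 : w 2 = 0) (c a : Polynomial K) :
    ∀ φ : MvPolynomial (Fin 3) K ≃ₐ[K] MvPolynomial (Fin 3) K, IsGraded w φ → φ (X 2) = X 2 →
    (∃ B : Polynomial K, φ (X 0) = Polynomial.aeval (X 2) a * X 0 + Polynomial.aeval (X 2) B * X 1) →
    (∃ D : Polynomial K, φ (X 1) = Polynomial.aeval (X 2) c * X 0 + Polynomial.aeval (X 2) D * X 1) →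
    IsGradedTame w φ := by
  classical
  induction c, a using EuclideanDomain.GCD.induction with
  | H0 a =>
    rintro φ hφ e2 ⟨B, hB⟩ ⟨D, hD⟩
    rw [map_zero, zero_mul, zero_add] at hD
    have hφD : φ (Polynomial.aeval (X 2) D) = Polynomial.aeval (X 2) D := by
      rw [← Polynomial.aeval_algHom_apply, e2]
    have h3 : X 1 = Polynomial.aeval (X 2) D * φ.symm (X 1) := by
      apply φ.injective
      rw [map_mul, AlgEquiv.apply_symm_apply, hφD, hD]
    have h4 := congrArg (aeval (![0, 1, Polynomial.X] : Fin 3 → Polynomial K)) h3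
    rw [map_mul, aeval_X, ← Polynomial.aeval_algHom_apply, aeval_X] at h4
    simp only [Matrix.cons_val, Polynomial.aeval_X_left_apply] at h4
    obtain ⟨δ, _, hδ⟩ := Polynomial.isUnit_iff.1 (IsUnit.of_mul_eq_one _ h4.symm)
    rw [← hδ, Polynomial.aeval_C, algebraMap_eq] at hD
    refine normalize hφ 1 δ hD fun φ' hφ' e1 e => tame_of_fix hφ' 0 fun j hj => ?_
    fin_cases j
    · exact absurd rfl hj
    · exact e1
    · exact (e 2 (by decide)).trans e2
  | H1 a b ha ih =>
    rintro φ hφ e2 ⟨B, hB⟩ ⟨D, hD⟩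
    have hv : (0 : Fin 3) ∉ (-(Polynomial.aeval (X 2) (b / a) * X 1) : MvPolynomial (Fin 3) K).vars := by
      apply notMem_vars_of_pderiv
      rw [map_neg, Derivation.leibniz, pderiv_aeval _ (by decide), pderiv_X_of_ne (by decide)]
      simp
    have hw : (-(Polynomial.aeval (X 2) (b / a) * X 1) : MvPolynomial (Fin 3) K).IsWeightedHomogeneous w (w 0) := by
      have := (hom_aeval h2 (b / a)).mul (isWeightedHomogeneous_X K w 1)
      rw [zero_add, h1] at this
      exact this.neg
    have hφq : φ (Polynomial.aeval (X 2) (b / a)) = Polynomial.aeval (X 2) (b / a) := by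
      rw [← Polynomial.aeval_algHom_apply, e2]
    refine tame_of_mul (elem_symm_gen 0 _ hv hw) (tame_of_mul (ε := sw) ?_ ?_)
    · rw [sw_symm]; exact sw_gen h1
    · refine ih _ (graded_mul (graded_mul hφ (elem_graded 0 _ hv hw)) (sw_gen h1).1) ?_ ?_ ?_
      · rw [AlgEquiv.mul_apply, sw_2, AlgEquiv.mul_apply, elem_ne _ _ _ _ (by decide), e2]
      · refine ⟨D, ?_⟩
        rw [AlgEquiv.mul_apply, sw_0, AlgEquiv.mul_apply, elem_ne _ _ _ _ (by decide), hD]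
      · refine ⟨B - b / a * D, ?_⟩
        rw [AlgEquiv.mul_apply, sw_1, AlgEquiv.mul_apply, elem_self, map_add, map_neg, map_mul, hφq, hB, hD]
        have : b % a = b - a * (b / a) := by rw [EuclideanDomain.mod_eq_sub_mul_div]
        rw [this]
        simp only [map_sub, map_mul]
        ring

lemma fix_z {w : Fin 3 → ℤ} (h0 : 0 < w 0) (h1 : 0 < w 1) (h2 : w 2 = 0)
    {φ : MvPolynomial (Fin 3) K ≃ₐ[K] MvPolynomial (Fin 3) K} (hφ : IsGraded w φ)
    (H : ∀ φ' : MvPolynomial (Fin 3) K ≃ₐ[K] MvPolynomial (Fin 3) K, IsGraded w φ' →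
      φ' (X 2) = X 2 → IsGradedTame w φ') : IsGradedTame w φ := by
  have key : ∀ P : MvPolynomial (Fin 3) K, P.IsWeightedHomogeneous w 0 →
      ∀ l, l ≠ 2 → l ∉ P.vars := by
    intro P hP l hl hmem
    obtain ⟨s, hs, hsl⟩ := (mem_vars_iff_mem_support l).1 hmem
    have hsl' : s l ≠ 0 := Finsupp.mem_support_iff.1 hsl
    have hd := hP (mem_support_iff.1 hs)
    rw [weight_eq, h2] at hd
    have a0 : (0 : ℤ) ≤ s 0 := by positivity
    have a1 : (0 : ℤ) ≤ s 1 := by positivity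
    have b0 : (s 0 : ℤ) * w 0 = 0 := by nlinarith
    have b1 : (s 1 : ℤ) * w 1 = 0 := by nlinarith
    have c0 : s 0 = 0 := by simpa [h0.ne'] using b0
    have c1 : s 1 = 0 := by simpa [h1.ne'] using b1
    fin_cases l
    · exact hsl' c0
    · exact hsl' c1
    · exact hl rfl
  have hs2 := graded_X (graded_symm hφ) 2
  have hp2 := graded_X hφ 2
  rw [h2] at hs2 hp2
  obtain ⟨α, F, hα, hF, he⟩ := affine_var φ 2 (fun l hl =>
    Or.inl (pderiv_eq_zero_of_notMem_vars (key _ hs2 l hl)))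
  have hFh : F.IsWeightedHomogeneous w 0 := by
    have : F = φ (X 2) - C α * X 2 := by rw [he]; ring
    rw [this]
    have h3 := (isWeightedHomogeneous_X K w 2).C_mul α
    rw [h2] at h3
    exact hp2.sub h3
  have hFe : F.vars = ∅ := by
    apply Finset.eq_empty_of_forall_notMem
    intro l
    by_cases hl : l = 2
    · rw [hl]; exact hF
    · exact key F hFh l hl
  obtain ⟨β, rfl⟩ : ∃ β : K, F = C β := ⟨_, vars_eq_empty_iff_eq_C.1 hFe⟩
  have hv : (2 : Fin 3) ∉ (C (-β) : MvPolynomial (Fin 3) K).vars := by simp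
  have hw : (C (-β) : MvPolynomial (Fin 3) K).IsWeightedHomogeneous w (w 2) := by
    rw [h2]; exact isWeightedHomogeneous_C _ _
  refine tame_of_mul (elem_symm_gen 2 _ hv hw) ?_
  have hgr := graded_mul hφ (elem_graded 2 _ hv hw)
  refine normalize hgr 2 α ?_ fun φ' hφ' e _ => H φ' hφ' e
  rw [AlgEquiv.mul_apply, elem_self, map_add, he, ← algebraMap_eq, AlgEquiv.commutes, algebraMap_eq,
    C_neg]
  ring

lemma case_one {w : Fin 3 → ℤ} (h01 : w 1 ≤ w 0) (h1 : 0 < w 1) (h2 : w 2 = 0)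
    {φ : MvPolynomial (Fin 3) K ≃ₐ[K] MvPolynomial (Fin 3) K} (hφ : IsGraded w φ) :
    IsGradedTame w φ := by
  have h0 : 0 < w 0 := by linarith
  refine fix_z h0 h1 h2 hφ fun φ hφ e2 => ?_
  rcases h01.eq_or_lt with h | h
  · obtain ⟨A, B, hAB⟩ := lin_form h0 h h2 _ (graded_X hφ 0)
    obtain ⟨c, D, hCD⟩ := lin_form h0 h h2 (φ (X 1)) (h ▸ graded_X hφ 1)
    exact case_gcd h0 h h2 c A φ hφ e2 ⟨B, hAB⟩ ⟨D, hCD⟩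
  · have k1 : ∀ s : Fin 3 →₀ ℕ, Finsupp.weight w s = w 1 → s 1 ≠ 0 := by
      intro s hs h'
      rw [weight_eq, h', h2] at hs
      simp only [Nat.cast_zero, zero_mul, mul_zero, add_zero] at hs
      rcases Nat.eq_zero_or_pos (s 0) with h3 | h3
      · rw [h3] at hs; simp at hs; omega
      · have : (1 : ℤ) ≤ s 0 := by exact_mod_cast h3
        nlinarith
    obtain ⟨v, hv⟩ := scaled_var hφ 1 k1
    refine normalize hφ 1 v hv fun φ' hφ' e1 e => tame_of_fix hφ' 0 fun j hj => ?_
    fin_cases j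
    · exact absurd rfl hj
    · exact e1
    · exact (e 2 (by decide)).trans e2
end
end GT
namespace GT
open MvPolynomial
section
set_option linter.unusedSectionVars false
variable {K : Type*} [Field K] [CharZero K]

/-- `X i ↦ T`, `X j ↦ u T`, other variable to zero -/
noncomputable def th (i j : Fin 3) : MvPolynomial (Fin 3) K →ₐ[K] Polynomial (Polynomial K) :=
  aeval fun l => if l = i then Polynomial.X else
    if l = j then Polynomial.C Polynomial.X * Polynomial.X else 0

/-- `X i ↦ u`, `X j ↦ T`, other variable to zero -/
noncomputable def pr (i j : Fin 3) : MvPolynomial (Fin 3) K →ₐ[K] Polynomial (Polynomial K) :=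
  aeval fun l => if l = i then Polynomial.C Polynomial.X else
    if l = j then Polynomial.X else 0

variable {i j k : Fin 3} (hij : i ≠ j) (hik : i ≠ k) (hjk : j ≠ k)
  (hall : ∀ l, l = i ∨ l = j ∨ l = k)

lemma th_i : th (K := K) i j (X i) = Polynomial.X := by simp [th]
lemma th_j (hij : i ≠ j) : th (K := K) i j (X j) = Polynomial.C Polynomial.X * Polynomial.X := by
  simp [th, hij.symm]
lemma th_k (hik : i ≠ k) (hjk : j ≠ k) : th (K := K) i j (X k) = 0 := by
  simp [th, hik.symm, hjk.symm]
lemma pr_i : pr (K := K) i j (X i) = Polynomial.C Polynomial.X := by simp [pr]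
lemma pr_j (hij : i ≠ j) : pr (K := K) i j (X j) = Polynomial.X := by
  simp [pr, hij.symm]
lemma pr_k (hik : i ≠ k) (hjk : j ≠ k) : pr (K := K) i j (X k) = 0 := by
  simp [pr, hik.symm, hjk.symm]

lemma th_coeff_zero (P : MvPolynomial (Fin 3) K) :
    ∃ a : K, (th i j P).coeff 0 = Polynomial.C a := by
  induction P using MvPolynomial.induction_on with
  | C a => exact ⟨a, by rw [algHom_C]; simp [Polynomial.algebraMap_apply]⟩
  | add p q hp hq =>
    obtain ⟨a, ha⟩ := hp
    obtain ⟨b, hb⟩ := hq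
    exact ⟨a + b, by simp [ha, hb]⟩
  | mul_X p n hp =>
    refine ⟨0, ?_⟩
    rw [map_mul, Polynomial.mul_coeff_zero]
    have : (th (K := K) i j (X n)).coeff 0 = 0 := by
      simp only [th, aeval_X]
      split_ifs <;> simp
    rw [this]; simp

lemma th_ev (hij : i ≠ j) (hik : i ≠ k) (hjk : j ≠ k) (hall : ∀ l, l = i ∨ l = j ∨ l = k)
    (φ : MvPolynomial (Fin 3) K ≃ₐ[K] MvPolynomial (Fin 3) K) (hk : φ (X k) = X k)
    (P : MvPolynomial (Fin 3) K) :
    th i j (φ P) = ev (th i j (φ (X i))) (th i j (φ (X j))) (pr i j P) := by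
  have : (th i j).comp (φ : MvPolynomial (Fin 3) K →ₐ[K] MvPolynomial (Fin 3) K) =
      (ev (th i j (φ (X i))) (th i j (φ (X j)))).comp (pr i j) := by
    apply algHom_ext
    intro l
    change th i j (φ (X l)) = ev _ _ (pr i j (X l))
    rcases hall l with rfl | rfl | rfl
    · rw [pr_i, ev_C, Polynomial.aeval_X]
    · rw [pr_j hij, ev_X]
    · rw [pr_k hik hjk, hk, th_k hik hjk, map_zero]
  exact DFunLike.congr_fun this P

lemma th_monomial (hij : i ≠ j) (hik : i ≠ k) (hjk : j ≠ k) (hall : ∀ l, l = i ∨ l = j ∨ l = k)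
    (s : Fin 3 →₀ ℕ) (a : K) (hs : s k = 0) :
    th i j (monomial s a) = Polynomial.monomial (s i + s j) (Polynomial.monomial (s j) a) := by
  have hu : (Finset.univ : Finset (Fin 3)) = {i, j, k} := by
    ext l; simpa using hall l
  rw [monomial_eq, Finsupp.prod_fintype _ _ (fun _ => pow_zero _), hu, Finset.prod_insert (by simp [hij, hik]),
    Finset.prod_insert (by simp [hjk]), Finset.prod_singleton, hs]
  simp only [map_mul, map_pow, th_i, th_j hij, algHom_C, pow_zero, mul_one]
  rw [← Polynomial.C_mul_X_pow_eq_monomial, ← Polynomial.C_mul_X_pow_eq_monomial]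
  simp only [Polynomial.algebraMap_apply, Algebra.algebraMap_self, RingHom.id_apply, map_mul, map_pow]
  ring

/-- weight zero polynomials of `θ`-degree at most one are affine -/
lemma affine_of_deg (hij : i ≠ j) (hik : i ≠ k) (hjk : j ≠ k) (hall : ∀ l, l = i ∨ l = j ∨ l = k)
    (P : MvPolynomial (Fin 3) K) (hP : ∀ s ∈ P.support, s k = 0)
    (hd : (th i j P).natDegree ≤ 1) :
    ∃ a b c : K, P = C a + C b * X i + C c * X j := by
  have hco : ∀ s : Fin 3 →₀ ℕ, s k = 0 → ((th i j P).coeff (s i + s j)).coeff (s j) = P.coeff s := by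
    intro s hs
    conv_lhs => rw [P.as_sum]
    rw [map_sum, Polynomial.finsetSum_coeff, Polynomial.finsetSum_coeff, Finset.sum_eq_single s]
    · rw [th_monomial hij hik hjk hall _ _ hs]; simp
    · intro t ht hts
      rw [th_monomial hij hik hjk hall _ _ (hP t ht), Polynomial.coeff_monomial]
      split_ifs with h
      · rw [Polynomial.coeff_monomial, if_neg]
        intro h'
        apply hts
        ext l
        rcases hall l with rfl | rfl | rfl
        · omega
        · omega
        · rw [hs, hP t ht]
      · simp
    · intro h
      rw [th_monomial hij hik hjk hall _ _ hs, notMem_support_iff.1 h]; simp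
  have hsum : ∀ s ∈ P.support, s = 0 ∨ s = Finsupp.single i 1 ∨ s = Finsupp.single j 1 := by
    intro s hs
    have hk := hP s hs
    have h1 : s i + s j ≤ 1 := by
      by_contra hcon
      apply mem_support_iff.1 hs
      have h2 : (th i j P).coeff (s i + s j) = 0 :=
        Polynomial.coeff_eq_zero_of_natDegree_lt (by omega)
      rw [← hco s hk, h2, Polynomial.coeff_zero]
    have : (s i = 0 ∧ s j = 0) ∨ (s i = 1 ∧ s j = 0) ∨ (s i = 0 ∧ s j = 1) := by omega
    rcases this with ⟨e, e'⟩ | ⟨e, e'⟩ | ⟨e, e'⟩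
    · left
      ext l
      rcases hall l with rfl | rfl | rfl <;> simp [*]
    · right; left
      ext l
      rcases hall l with rfl | rfl | rfl <;> simp [*, Ne.symm]
    · right; right
      ext l
      rcases hall l with rfl | rfl | rfl <;> simp [*, Ne.symm]
  have : ∀ Q : MvPolynomial (Fin 3) K, Q = ∑ s ∈ P.support, monomial s (coeff s P) →
      ∃ a b c : K, Q = C a + C b * X i + C c * X j := by
    rintro _ rfl
    refine Finset.sum_induction _ (fun Q : MvPolynomial (Fin 3) K =>
      ∃ a b c : K, Q = C a + C b * X i + C c * X j) ?_ ?_ ?_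
    · rintro _ _ ⟨a, b, c, rfl⟩ ⟨a', b', c', rfl⟩
      exact ⟨a + a', b + b', c + c', by simp only [C_add]; ring⟩
    · exact ⟨0, 0, 0, by simp⟩
    · intro s hs
      rcases hsum s hs with h | h | h
      · exact ⟨coeff s P, 0, 0, by subst h; simp⟩
      · exact ⟨0, coeff s P, 0, by rw [C_mul_X_eq_monomial, ← h]; simp⟩
      · exact ⟨0, 0, coeff s P, by rw [C_mul_X_eq_monomial (s := j), ← h]; simp⟩
  exact this P P.as_sum

lemma jung_base (hij : i ≠ j) (hik : i ≠ k) (hjk : j ≠ k) (hall : ∀ l, l = i ∨ l = j ∨ l = k)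
    {w : Fin 3 → ℤ} (wi : w i = 0) (wj : w j = 0)
    {φ : MvPolynomial (Fin 3) K ≃ₐ[K] MvPolynomial (Fin 3) K} (hφ : IsGraded w φ)
    (hk : φ (X k) = X k)
    (hi : ∃ a b c : K, φ (X i) = C a + C b * X i + C c * X j)
    (hj : ∃ a b c : K, φ (X j) = C a + C b * X i + C c * X j) : IsGradedTame w φ := by
  obtain ⟨a, b, c, hi⟩ := hi
  obtain ⟨a', b', c', hj⟩ := hj
  have hC : ∀ r : K, φ (C r) = C r := fun r => by
    rw [← algebraMap_eq, AlgEquiv.commutes]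
  have hvi : i ∉ (C (-a) : MvPolynomial (Fin 3) K).vars := by simp
  have hvj : j ∉ (C (-a') : MvPolynomial (Fin 3) K).vars := by simp
  have hwi : (C (-a) : MvPolynomial (Fin 3) K).IsWeightedHomogeneous w (w i) := by
    rw [wi]; exact isWeightedHomogeneous_C _ _
  have hwj : (C (-a') : MvPolynomial (Fin 3) K).IsWeightedHomogeneous w (w j) := by
    rw [wj]; exact isWeightedHomogeneous_C _ _
  have hlin : ∀ b c : K, ∃ d : Fin 3 → K, C b * X i + C c * X j = ∑ l, C (d l) * (X l : MvPolynomial (Fin 3) K) := by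
    intro b c
    have hu : (Finset.univ : Finset (Fin 3)) = {i, j, k} := by
      ext l; simpa using hall l
    refine ⟨fun l => if l = i then b else if l = j then c else 0, ?_⟩
    rw [hu, Finset.sum_insert (by simp [hij, hik]),
      Finset.sum_insert (by simp [hjk]), Finset.sum_singleton]
    simp [hij.symm, hik.symm, hjk.symm]
  refine tame_of_mul (elem_symm_gen i _ hvi hwi) (tame_of_mul (elem_symm_gen j _ hvj hwj) (tame_of_gen ⟨?_, Or.inr ?_⟩))
  · exact graded_mul (graded_mul hφ (elem_graded i _ hvi hwi)) (elem_graded j _ hvj hwj)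
  · intro l
    rcases hall l with rfl | rfl | rfl
    · obtain ⟨d, hd⟩ := hlin b c
      refine ⟨d, ?_⟩
      rw [← hd, AlgEquiv.mul_apply, elem_ne _ _ _ _ hij, AlgEquiv.mul_apply, elem_self, map_add, hC, hi, C_neg]
      ring
    · obtain ⟨d, hd⟩ := hlin b' c'
      refine ⟨d, ?_⟩
      rw [← hd, AlgEquiv.mul_apply, elem_self, map_add, AlgEquiv.mul_apply, AlgEquiv.mul_apply,
        elem_ne _ _ _ _ hij.symm]
      have : elem i (C (-a)) hvi (C (-a')) = C (-a') :=
        AlgEquiv.commutes _ _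
      rw [this, hC, hj, C_neg]
      ring
    · refine ⟨fun m => if m = l then 1 else 0, ?_⟩
      rw [AlgEquiv.mul_apply, elem_ne _ _ _ _ hjk.symm, AlgEquiv.mul_apply, elem_ne _ _ _ _ hik.symm, hk,
        Finset.sum_eq_single l]
      · simp
      · intro m _ hm; simp [hm]
      · simp

lemma jung_step {i j k : Fin 3} (hij : i ≠ j) (hik : i ≠ k)
    {w : Fin 3 → ℤ} (wi : w i = 0) (wj : w j = 0) (c : K) (m : ℕ)
    {φ : MvPolynomial (Fin 3) K ≃ₐ[K] MvPolynomial (Fin 3) K} (hφ : IsGraded w φ)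
    (hk : φ (X k) = X k)
    (H : ∀ φ' : MvPolynomial (Fin 3) K ≃ₐ[K] MvPolynomial (Fin 3) K, IsGraded w φ' →
      φ' (X k) = X k → φ' (X j) = φ (X j) → φ' (X i) = φ (X i) - C c * φ (X j) ^ m →
      IsGradedTame w φ') : IsGradedTame w φ := by
  have hv : i ∉ (-(C c * X j ^ m) : MvPolynomial (Fin 3) K).vars := by
    apply notMem_vars_of_pderiv
    rw [map_neg, pderiv_C_mul, pderiv_pow, pderiv_X_of_ne hij.symm]; simp
  have hw : (-(C c * X j ^ m) : MvPolynomial (Fin 3) K).IsWeightedHomogeneous w (w i) := by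
    have := ((isWeightedHomogeneous_X K w j).pow m).C_mul c
    rw [wj, smul_zero, ← wi] at this
    exact this.neg
  refine tame_of_mul (elem_symm_gen i _ hv hw) (H _ (graded_mul hφ (elem_graded i _ hv hw)) ?_ ?_ ?_)
  · rw [AlgEquiv.mul_apply, elem_ne _ _ _ _ hik.symm, hk]
  · rw [AlgEquiv.mul_apply, elem_ne _ _ _ _ hij.symm]
  · rw [AlgEquiv.mul_apply, elem_self, map_add, map_neg, map_mul, map_pow, ← algebraMap_eq,
      AlgEquiv.commutes]
    ring

lemma jung_fix (hij : i ≠ j) (hik : i ≠ k) (hjk : j ≠ k) (hall : ∀ l, l = i ∨ l = j ∨ l = k)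
    {w : Fin 3 → ℤ} (wi : w i = 0) (wj : w j = 0)
    (hwk : ∀ s : Fin 3 →₀ ℕ, Finsupp.weight w s = 0 → s k = 0) (n : ℕ) :
    ∀ φ : MvPolynomial (Fin 3) K ≃ₐ[K] MvPolynomial (Fin 3) K, IsGraded w φ → φ (X k) = X k →
    (th i j (φ (X i))).natDegree + (th i j (φ (X j))).natDegree = n → IsGradedTame w φ := by
  induction n using Nat.strong_induction_on with
  | _ n ih =>
    intro φ hφ hk hn
    rcases jung_reduce (th i j (φ (X i))) (th i j (φ (X j))) (th_coeff_zero _) (th_coeff_zero _)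
      (pr i j (φ.symm (X i))) (pr i j (φ.symm (X j)))
      (by rw [← th_ev hij hik hjk hall φ hk, AlgEquiv.apply_symm_apply, th_i])
      (by rw [← th_ev hij hik hjk hall φ hk, AlgEquiv.apply_symm_apply, th_j hij]) with
      ⟨h1, h2⟩ | ⟨c, m, h⟩ | ⟨c, m, h⟩
    · refine jung_base hij hik hjk hall wi wj hφ hk
        (affine_of_deg hij hik hjk hall _ (fun s hs => hwk s ?_) h1)
        (affine_of_deg hij hik hjk hall _ (fun s hs => hwk s ?_) h2)
      · rw [← wi]; exact graded_X hφ i (mem_support_iff.1 hs)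
      · rw [← wj]; exact graded_X hφ j (mem_support_iff.1 hs)
    · refine jung_step hij hik wi wj c m hφ hk fun φ' hφ' ek ej ei => ih _ ?_ φ' hφ' ek rfl
      have : th i j (φ' (X i)) = th i j (φ (X i)) - Polynomial.C (Polynomial.C c) * th i j (φ (X j)) ^ m := by
        rw [ei, map_sub, map_mul, map_pow, algHom_C]; rfl
      rw [this, ej]; omega
    · refine jung_step hij.symm hjk wj wi c m hφ hk fun φ' hφ' ek ej ei => ih _ ?_ φ' hφ' ek rfl
      have : th i j (φ' (X j)) = th i j (φ (X j)) - Polynomial.C (Polynomial.C c) * th i j (φ (X i)) ^ m := by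
        rw [ei, map_sub, map_mul, map_pow, algHom_C]; rfl
      rw [this, ej]; omega

lemma case_jung (hij : i ≠ j) (hik : i ≠ k) (hjk : j ≠ k) (hall : ∀ l, l = i ∨ l = j ∨ l = k)
    {w : Fin 3 → ℤ} (wi : w i = 0) (wj : w j = 0) (wk : w k ≠ 0)
    {φ : MvPolynomial (Fin 3) K ≃ₐ[K] MvPolynomial (Fin 3) K} (hφ : IsGraded w φ) :
    IsGradedTame w φ := by
  have hw : ∀ s : Fin 3 →₀ ℕ, Finsupp.weight w s = s k * w k := by
    intro s
    have hu : (Finset.univ : Finset (Fin 3)) = {i, j, k} := by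
      ext l; simpa using hall l
    rw [Finsupp.weight_apply, s.sum_fintype (fun i c => c • w i) (fun _ => zero_smul _ _), hu,
      Finset.sum_insert (by simp [hij, hik]), Finset.sum_insert (by simp [hjk]), Finset.sum_singleton,
      wi, wj]
    simp
  obtain ⟨v, hv⟩ := scaled_var hφ k (fun s hs h => by
    rw [hw, h] at hs; simp at hs; exact wk hs.symm)
  refine normalize hφ k v hv fun φ' hφ' ek _ =>
    jung_fix hij hik hjk hall wi wj (fun s hs => ?_) _ φ' hφ' ek rfl
  rw [hw] at hs
  simpa [wk] using hs
end
end GT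
open MvPolynomial

/-- Let `Γ` be the `ℤ`-grading of `K[x,y,z]` with `deg x = a`, `deg y = b`,
`deg z = -c`, where `a ≥ b ≥ 0`, `c ≥ 0`, at least one of `a, b, c` is zero and
`(a,b,c) ≠ (0,0,0)`. Then every `Γ`-graded automorphism of `K[x,y,z]` is graded-tame.
Here `x = X 0`, `y = X 1`, `z = X 2`. -/
theorem graded_automorphism_is_graded_tame_of_some_zero_weight
    {K : Type*} [Field K] [IsAlgClosed K] [CharZero K]
    (a b c : ℕ) (hab : b ≤ a)
    (hzero : a = 0 ∨ b = 0 ∨ c = 0)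
    (hne : ¬ (a = 0 ∧ b = 0 ∧ c = 0))
    (φ : MvPolynomial (Fin 3) K ≃ₐ[K] MvPolynomial (Fin 3) K)
    (hφ : IsGraded ![(a : ℤ), (b : ℤ), -(c : ℤ)] φ) :
    IsGradedTame ![(a : ℤ), (b : ℤ), -(c : ℤ)] φ := by

  rcases Nat.eq_zero_or_pos b with hb | hb
  · rcases Nat.eq_zero_or_pos c with hc | hc
    · refine GT.case_jung (i := 1) (j := 2) (k := 0) (by decide) (by decide) (by decide) (by decide)
        (by simp [hb]) (by simp [hc]) ?_ hφ
      simp only [Matrix.cons_val]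
      omega
    · rcases Nat.eq_zero_or_pos a with ha | ha
      · refine GT.case_jung (i := 0) (j := 1) (k := 2) (by decide) (by decide) (by decide) (by decide)
          (by simp [ha]) (by simp [hb]) ?_ hφ
        simp only [Matrix.cons_val]
        omega
      · refine GT.case_three ?_ ?_ ?_ hφ
        all_goals simp only [Matrix.cons_val]
        all_goals omega
  · refine GT.case_one ?_ ?_ ?_ hφ
    all_goals simp only [Matrix.cons_val]
    all_goals omega
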